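/- Suppose 𝔾 ⊆ 𝔾* ⊂ ℤ^d are nonempty symmetric index sets and let U_𝔾 and U_{𝔾*} be the Galerkin solutions of the source system in (V_𝔾)^N and (V_{𝔾*})^N respectively. Then: (i) the local upper bound ‖U_{𝔾*} − U_𝔾‖²_a ≤ (1/α_*) η̄²(U_𝔾; 𝔾*) holds; (ii) if ‖U − U_{𝔾*}‖²_a ≤ μ ‖U − U_𝔾‖²_a for some μ ∈ (0,1), where U is the exact solution, then 𝔾* satisfies the Dörfler condition η̄(U_𝔾; 𝔾*) ≥ θ η̄(U_𝔾) with θ = √((1−μ) α_*/α^*). -/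

import Mathlib

/-!
Why the theorem holds. Since `σ > d/2`, the Fourier coefficients of `V` are absolutely summable
(`summable_norm_of_memHs`), so multiplication by `V`, a convolution in Fourier coefficients, is a
symmetric operator on `L_p²` (`summable_mulCoeff`, `l2inner_mulCoeff_symm`). Hence `a` is a
symmetric form on `H_p¹` and, by the bounds on `V`,
`α_* ‖u‖²_{H¹} ≤ a(u,u) ≤ α^* ‖u‖²_{H¹}`; the residual of an `H_p¹` function lies in `H_p^{-1}`
and satisfies `(r̄(w),v) = (f,v) - a(w,v)`.

The increment `e = u_{𝔾*} - u_𝔾` lies in `V_{𝔾*}` and satisfies `a(e,e) = (Π_{𝔾*} r̄(u_𝔾), e)`.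
The duality of `H_p^{-1}` and `H_p¹` together with coercivity bounds this by `α_*⁻¹ η̄²(u_𝔾;𝔾*)`
(`local_upper`). Testing the full error equation with the Riesz representative of the residual
gives the global bound `η̄²(u_𝔾) ≤ α^* ‖u - u_𝔾‖²_a` (`global_lower`).

By Galerkin orthogonality (`pythagoras`),
`‖U_{𝔾*} - U_𝔾‖²_a = ‖U - U_𝔾‖²_a - ‖U - U_{𝔾*}‖²_a ≥ (1-μ) ‖U - U_𝔾‖²_a`
under the error reduction assumption, and the two bounds combine to the Dörfler condition.
-/

/-!
Common setup: periodic functions on `Ω = [0,2π)^d` are represented by their Fourier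
coefficients `u : (Fin d → ℤ) → ℂ` with respect to the orthonormal basis
`e_G(x) = (2π)^{-d/2} e^{iG·x}` of `L_p^2(Ω)`.
-/

open scoped BigOperators Pointwise Classical

noncomputable section

namespace APW

/-- Frequency indices `G ∈ ℤ^d`. -/
abbrev Idx (d : ℕ) := Fin d → ℤ

/-- A periodic function/distribution, represented by its Fourier coefficients
`û_G = (e_G, u)`. -/
abbrev Coeff (d : ℕ) := Idx d → ℂ

variable {d : ℕ}

/-- `|G|²`, the squared Euclidean norm of a frequency `G ∈ ℤ^d`. -/
def gnormSq (G : Idx d) : ℝ := ∑ i, ((G i : ℝ)) ^ 2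

/-- Squared `H_p^s(Ω)` norm: `Σ_G (1+|G|²)^s |û_G|²`. -/
def hsNormSq (s : ℝ) (u : Coeff d) : ℝ := ∑' G, (1 + gnormSq G) ^ s * ‖u G‖ ^ 2

/-- `H_p^s(Ω)` norm. -/
def hsNorm (s : ℝ) (u : Coeff d) : ℝ := Real.sqrt (hsNormSq s u)

/-- Membership in `H_p^s(Ω)` (real-valued periodic functions:
`û_{-G} = (û_G)^*` and the weighted coefficient series is summable). -/
def memHs (s : ℝ) (u : Coeff d) : Prop :=
  Summable (fun G : Idx d => (1 + gnormSq G) ^ s * ‖u G‖ ^ 2) ∧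
    ∀ G, u (-G) = starRingEnd ℂ (u G)

/-- The `L_p²(Ω)` inner product `(u,v) = Σ_G û_G^* v̂_G`. -/
def l2inner (u v : Coeff d) : ℂ := ∑' G, starRingEnd ℂ (u G) * v G

/-- Squared `L²` norm. -/
def l2NormSq (u : Coeff d) : ℝ := ∑' G, ‖u G‖ ^ 2

/-- `L²` norm. -/
def l2Norm (u : Coeff d) : ℝ := Real.sqrt (l2NormSq u)

/-- The `L²`-orthogonal projection `Π_𝔾` onto `V_𝔾` (truncation of Fourier coefficients). -/
def proj (𝔾 : Set (Idx d)) (u : Coeff d) : Coeff d := fun G => if G ∈ 𝔾 then u G else 0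

/-- The index set `𝔾^M = {G ∈ ℤ^d : |G| ≤ M}`. -/
def ball (d : ℕ) (M : ℝ) : Set (Idx d) := {G | Real.sqrt (gnormSq G) ≤ M}

/-- `V_𝔾 = span{e_G : G ∈ 𝔾}`: coefficient sequences supported in `𝔾`. -/
def pwSpace (𝔾 : Set (Idx d)) : Set (Coeff d) := {u | ∀ G, G ∉ 𝔾 → u G = 0}

/-- Fourier coefficients of the pointwise product `V·u` (a convolution). -/
def mulCoeff (V u : Coeff d) : Coeff d :=
  fun G => ((Real.sqrt ((2 * Real.pi) ^ d))⁻¹ : ℝ) * ∑' G', V (G - G') * u G'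

/-- The bilinear form `a(u,v) = (∇u,∇v) + (Vu,v)`, in Fourier coefficients. -/
def aForm (V u v : Coeff d) : ℂ :=
  (∑' G, (gnormSq G : ℂ) * starRingEnd ℂ (u G) * v G) + l2inner (mulCoeff V u) v

/-- The energy norm `‖u‖_a = √(a(u,u))`. -/
def aNorm (V u : Coeff d) : ℝ := Real.sqrt (aForm V u u).re

/-- The bounds `ν_* ≤ V ≤ ν^*` on the potential, encoded through the quadratic form
`(Vu, u)` of multiplication by `V`. -/
def PotentialBounds (V : Coeff d) (ν₁ ν₂ : ℝ) : Prop :=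
  ∀ u, memHs 0 u →
    ν₁ * l2NormSq u ≤ (l2inner (mulCoeff V u) u).re ∧
      (l2inner (mulCoeff V u) u).re ≤ ν₂ * l2NormSq u

/-- `K : L_p² → H_p¹` is the solution operator: `a(Kw, v) = (w, v)` for all `v ∈ H_p¹`. -/
def IsSolutionOp (V : Coeff d) (K : Coeff d → Coeff d) : Prop :=
  ∀ w, memHs 0 w →
    memHs 1 (K w) ∧ ∀ v, memHs 1 v → aForm V (K w) v = l2inner w v

/-- `P` is the Galerkin projection `P_𝔾 : H_p¹ → V_𝔾`:
`a(u − P_𝔾 u, v) = 0` for all `v ∈ V_𝔾`. -/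
def IsGalerkin (V : Coeff d) (𝔾 : Set (Idx d)) (P : Coeff d → Coeff d) : Prop :=
  ∀ u, memHs 1 u →
    P u ∈ pwSpace 𝔾 ∧ memHs 1 (P u) ∧
      ∀ v ∈ pwSpace 𝔾, memHs 1 v → aForm V (u - P u) v = 0

/-- `ρ_Ω(𝔾) = sup_{‖f‖_{L²}=1} inf_{v ∈ V_𝔾} ‖Kf − v‖_a`. -/
def rho (V : Coeff d) (K : Coeff d → Coeff d) (𝔾 : Set (Idx d)) : ℝ :=
  ⨆ f : {f : Coeff d // memHs 0 f ∧ l2Norm f = 1},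
    ⨅ v : pwSpace 𝔾, aNorm V (K f.1 - v.1)

/-- `ν(𝔾) = sup_{f ∈ H_p¹, ‖f‖_a=1} inf_{v ∈ V_𝔾} ‖Kf − v‖_a`. -/
def nuG (V : Coeff d) (K : Coeff d → Coeff d) (𝔾 : Set (Idx d)) : ℝ :=
  ⨆ f : {f : Coeff d // memHs 1 f ∧ aNorm V f = 1},
    ⨅ v : pwSpace 𝔾, aNorm V (K f.1 - v.1)

/-- The eigenspace `M(λ)` of the eigenvalue problem `a(u,v) = λ(u,v)`. -/
def eigenspace (V : Coeff d) (lam : ℝ) : Set (Coeff d) :=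
  {u | memHs 1 u ∧ ∀ v, memHs 1 v → aForm V u v = (lam : ℂ) * l2inner u v}

/-- `δ_𝔾(λ) = sup_{w ∈ M(λ), ‖w‖_a=1} inf_{v ∈ V_𝔾} ‖w − v‖_a`. -/
def deltaG (V : Coeff d) (𝔾 : Set (Idx d)) (lam : ℝ) : ℝ :=
  ⨆ w : {w : Coeff d // w ∈ eigenspace V lam ∧ aNorm V w = 1},
    ⨅ v : pwSpace 𝔾, aNorm V (w.1 - v.1)

/-- A discrete eigenpair of the planewave discretization in `V_𝔾`. -/
def IsDiscreteEigenpair (V : Coeff d) (𝔾 : Set (Idx d)) (lam : ℝ) (u : Coeff d) : Prop :=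
  u ∈ pwSpace 𝔾 ∧ memHs 1 u ∧
    ∀ v ∈ pwSpace 𝔾, memHs 1 v → aForm V u v = (lam : ℂ) * l2inner u v

/-- The spectral projection `E_𝔾(λ) = (2πi)^{-1}∮_Γ (z − K_𝔾)^{-1} dz` associated with
`K_𝔾` and the discrete invariant subspace `S = M_𝔾(λ)`, characterized algebraically:
a linear idempotent commuting with `K_𝔾` whose range is `S`. -/
def IsSpecProj (KG E : Coeff d → Coeff d) (S : Set (Coeff d)) : Prop :=
  (∀ u v, E (u + v) = E u + E v) ∧ (∀ (c : ℂ) (u), E (c • u) = c • E u) ∧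
    (∀ u, E (E u) = E u) ∧ (∀ u, E u ∈ S) ∧ (∀ u ∈ S, E u = u) ∧
      ∀ u, E (KG u) = KG (E u)

/-- Residual of an approximate eigenpair: `r(w) = λw + Δw − Vw`. -/
def residual (V : Coeff d) (lam : ℝ) (w : Coeff d) : Coeff d :=
  fun G => (lam : ℂ) * w G - (gnormSq G : ℂ) * w G - mulCoeff V w G

/-- Residual of the source problem: `r̄(w) = f − Lw = f + Δw − Vw`. -/
def rbar (V f w : Coeff d) : Coeff d :=
  fun G => f G - ((gnormSq G : ℂ) * w G + mulCoeff V w G)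

/-- A posteriori estimator `η(r; 𝔾*) = ‖Π_{𝔾*} r‖_{H_p^{-1}}`. -/
def eta (𝔾s : Set (Idx d)) (r : Coeff d) : ℝ := hsNorm (-1) (proj 𝔾s r)

/-- Energy norm of an `N`-tuple. -/
def aNormT {N : ℕ} (V : Coeff d) (U : Fin N → Coeff d) : ℝ :=
  Real.sqrt (∑ i, (aNorm V (U i)) ^ 2)

/-- The subspace distance `d_{H_p¹(Ω)}(X,Y) = sup_{u∈X,‖u‖_a=1} inf_{v∈Y} ‖u−v‖_a`. -/
def dSub (V : Coeff d) (X Y : Set (Coeff d)) : ℝ :=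
  ⨆ u : {u : Coeff d // u ∈ X ∧ aNorm V u = 1}, ⨅ v : Y, aNorm V (u.1 - v.1)

/-- The symmetric subspace distance `δ_{H_p¹(Ω)}(X,Y)`. -/
def deltaSub (V : Coeff d) (X Y : Set (Coeff d)) : ℝ :=
  max (dSub V X Y) (dSub V Y X)


/-! ### Absolute summability of the Fourier coefficients of the potential -/

lemma gnormSq_nonneg (G : Idx d) : 0 ≤ gnormSq G :=
  Finset.sum_nonneg fun _ _ => sq_nonneg _

lemma one_add_gnormSq_pos (G : Idx d) : 0 < 1 + gnormSq G := by
  linarith [gnormSq_nonneg G]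

lemma gnormSq_neg (G : Idx d) : gnormSq (-G) = gnormSq G := by
  simp [gnormSq]

/-- Comparison with `∑ ‖z‖ ^ (-2σ)` over the standard lattice in `ℝ^d` with the sup norm. -/
lemma summable_weight {σ : ℝ} (hσ : (d : ℝ) / 2 < σ) :
    Summable (fun G : Idx d => (1 + gnormSq G) ^ (-σ)) := by
  let b := Pi.basisFun ℝ (Fin d)
  let L := Submodule.span ℤ (Set.range b)
  have hrank : Module.finrank ℤ L = d := by
    rw [ZLattice.rank ℝ L]; simp
  have hmem : ∀ G : Idx d, (fun i => (G i : ℝ)) ∈ L := by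
    intro G
    have : (fun i => (G i : ℝ)) = ∑ i, G i • b i := by
      ext j
      simp [b, Finset.sum_apply, Pi.single_apply]
    rw [this]
    exact Submodule.sum_mem _ fun i _ => Submodule.smul_mem _ _ (Submodule.subset_span ⟨i, rfl⟩)
  let φ : Idx d → L := fun G => ⟨fun i => (G i : ℝ), hmem G⟩
  have hφ : Function.Injective φ := by
    intro G H h
    ext i
    have : (G i : ℝ) = (H i : ℝ) := congrFun (congrArg Subtype.val h) i
    exact_mod_cast this
  have hs := ZLattice.summable_norm_rpow L (-(2 * σ)) (by rw [hrank]; linarith)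
  have hs2 := hs.comp_injective hφ
  have hσ0 : 0 < σ := lt_of_le_of_lt (by positivity) hσ
  refine hs2.of_norm_bounded_eventually ?_
  rw [Filter.eventually_cofinite]
  refine (Set.finite_singleton (0 : Idx d)).subset ?_
  intro G hG
  by_contra hne
  apply hG
  have hne' : φ G ≠ 0 := fun h => hne (hφ (h.trans (by ext i; simp [φ])))
  have hpos : 0 < ‖φ G‖ := norm_pos_iff.mpr hne'
  have hle : ‖φ G‖ ^ 2 ≤ 1 + gnormSq G := by
    have h1 : ‖φ G‖ ≤ Real.sqrt (gnormSq G) := by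
      change ‖(fun i => (G i : ℝ))‖ ≤ _
      rw [pi_norm_le_iff_of_nonneg (Real.sqrt_nonneg _)]
      intro i
      rw [Real.norm_eq_abs]
      apply Real.abs_le_sqrt
      exact Finset.single_le_sum (f := fun i => (G i : ℝ) ^ 2)
        (fun _ _ => sq_nonneg _) (Finset.mem_univ i)
    have h2 := pow_le_pow_left₀ hpos.le h1 2
    rw [Real.sq_sqrt (gnormSq_nonneg G)] at h2
    linarith
  rw [Real.norm_of_nonneg (Real.rpow_nonneg (one_add_gnormSq_pos G).le _)]
  change _ ≤ ‖φ G‖ ^ (-(2 * σ))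
  have : ‖φ G‖ ^ (-(2 * σ)) = (‖φ G‖ ^ 2) ^ (-σ) := by
    rw [← Real.rpow_natCast, ← Real.rpow_mul hpos.le]
    congr 1
    push_cast
    ring
  rw [this]
  exact Real.rpow_le_rpow_of_nonpos (by positivity) hle (by linarith)

/-- For `σ > d/2`, functions in `H_p^σ` have absolutely summable Fourier coefficients, because
`2‖V_G‖ ≤ (1+|G|²)^{-σ} + (1+|G|²)^σ ‖V_G‖²`. -/
lemma summable_norm_of_memHs {σ : ℝ} (hσ : (d : ℝ) / 2 < σ) {V : Coeff d} (hV : memHs σ V) :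
    Summable (fun G => ‖V G‖) := by
  refine Summable.of_nonneg_of_le (fun _ => norm_nonneg _) ?_
    ((summable_weight hσ).add hV.1)
  intro G
  have hw := Real.rpow_pos_of_pos (one_add_gnormSq_pos G) σ
  rw [Real.rpow_neg (one_add_gnormSq_pos G).le]
  set w := (1 + gnormSq G) ^ σ
  have h1 : w * w⁻¹ = 1 := mul_inv_cancel₀ hw.ne'
  have h2 : 0 < w⁻¹ := inv_pos.mpr hw
  have h3 : 0 ≤ w⁻¹ * (w * ‖V G‖ - 1) ^ 2 := by positivity
  have h4 : w⁻¹ * (w * ‖V G‖ - 1) ^ 2 = w * ‖V G‖ ^ 2 - 2 * ‖V G‖ + w⁻¹ := by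
    linear_combination (w * ‖V G‖ ^ 2 - 2 * ‖V G‖) * h1
  linarith [norm_nonneg (V G)]

/-! ### Square-summable sequences and convolution with the potential -/

lemma memHs_zero_iff {u : Coeff d} :
    memHs 0 u ↔ Summable (fun G => ‖u G‖ ^ 2) ∧ ∀ G, u (-G) = starRingEnd ℂ (u G) := by
  simp [memHs]

lemma memHs_one_iff {u : Coeff d} :
    memHs 1 u ↔ Summable (fun G => (1 + gnormSq G) * ‖u G‖ ^ 2) ∧
      ∀ G, u (-G) = starRingEnd ℂ (u G) := by
  simp [memHs]

lemma memHs_one.sq {u : Coeff d} (hu : memHs 1 u) : Summable (fun G => ‖u G‖ ^ 2) := by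
  refine Summable.of_nonneg_of_le (fun _ => by positivity) ?_ (memHs_one_iff.1 hu).1
  intro G
  nlinarith [gnormSq_nonneg G, sq_nonneg ‖u G‖, mul_nonneg (gnormSq_nonneg G) (sq_nonneg ‖u G‖)]

lemma memHs_one.grad {u : Coeff d} (hu : memHs 1 u) :
    Summable (fun G => gnormSq G * ‖u G‖ ^ 2) := by
  refine ((memHs_one_iff.1 hu).1.sub (memHs_one.sq hu)).congr ?_
  intro G
  ring

lemma memHs_one.zero {u : Coeff d} (hu : memHs 1 u) : memHs 0 u :=
  memHs_zero_iff.2 ⟨memHs_one.sq hu, hu.2⟩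

lemma norm_sub_sq_le (a b : ℂ) : ‖a - b‖ ^ 2 ≤ 2 * ‖a‖ ^ 2 + 2 * ‖b‖ ^ 2 := by
  have := pow_le_pow_left₀ (norm_nonneg _) (norm_sub_le a b) 2
  nlinarith [sq_nonneg (‖a‖ - ‖b‖)]

lemma memHs_one.sub {u v : Coeff d} (hu : memHs 1 u) (hv : memHs 1 v) : memHs 1 (u - v) := by
  rw [memHs_one_iff] at *
  constructor
  · refine Summable.of_nonneg_of_le
      (fun G => mul_nonneg (one_add_gnormSq_pos G).le (sq_nonneg _)) ?_
      ((hu.1.mul_left 2).add (hv.1.mul_left 2))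
    intro G
    have := mul_le_mul_of_nonneg_left (norm_sub_sq_le (u G) (v G)) (one_add_gnormSq_pos G).le
    simp only [Pi.sub_apply]
    linarith
  · intro G
    simp [hu.2, hv.2]

lemma summable_inner {u v : Coeff d} (hu : Summable (fun G => ‖u G‖ ^ 2))
    (hv : Summable (fun G => ‖v G‖ ^ 2)) :
    Summable (fun G => starRingEnd ℂ (u G) * v G) := by
  refine Summable.of_norm_bounded (hu.add hv) ?_
  intro G
  rw [norm_mul, RCLike.norm_conj]
  nlinarith [sq_nonneg (‖u G‖ - ‖v G‖), sq_nonneg (‖u G‖), sq_nonneg (‖v G‖)]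

/-- The shear `(G, G') ↦ (G - G', G')`, which turns a convolution kernel into a product. -/
def shear (d : ℕ) : Idx d × Idx d ≃ Idx d × Idx d where
  toFun p := (p.1 - p.2, p.2)
  invFun p := (p.1 + p.2, p.2)
  left_inv p := by simp
  right_inv p := by simp

lemma summable_kernel_right {V u : Coeff d} (hV : Summable (fun G => ‖V G‖))
    (hu : Summable (fun G => ‖u G‖ ^ 2)) :
    Summable (fun p : Idx d × Idx d => ‖V (p.1 - p.2)‖ * ‖u p.2‖ ^ 2) := by
  have := hV.mul_of_nonneg hu (fun _ => norm_nonneg _) (fun _ => sq_nonneg _)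
  exact (shear d).summable_iff.2 this

lemma summable_sub_right {V : Coeff d} (hV : Summable (fun G => ‖V G‖)) (G : Idx d) :
    Summable (fun G' => ‖V (G - G')‖) :=
  (Equiv.subLeft G).summable_iff.2 hV

lemma summable_kernel_left {V v : Coeff d} (hV : Summable (fun G => ‖V G‖))
    (hv : Summable (fun G => ‖v G‖ ^ 2)) :
    Summable (fun p : Idx d × Idx d => ‖V (p.1 - p.2)‖ * ‖v p.1‖ ^ 2) := by
  have hV' : Summable (fun G => ‖V (-G)‖) := (Equiv.neg (Idx d)).summable_iff.2 hV
  have := (summable_kernel_right (V := fun G => V (-G)) hV' hv)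
  have h2 := (Equiv.prodComm (Idx d) (Idx d)).summable_iff.2 this
  refine h2.congr ?_
  intro p
  simp

lemma summable_kernel {V u v : Coeff d} (hV : Summable (fun G => ‖V G‖))
    (hu : Summable (fun G => ‖u G‖ ^ 2)) (hv : Summable (fun G => ‖v G‖ ^ 2)) :
    Summable (fun p : Idx d × Idx d =>
      starRingEnd ℂ (V (p.1 - p.2)) * starRingEnd ℂ (u p.2) * v p.1) := by
  refine Summable.of_norm_bounded ((summable_kernel_right hV hu).add
    (summable_kernel_left hV hv)) ?_
  intro p
  rw [norm_mul, norm_mul, RCLike.norm_conj, RCLike.norm_conj, ← mul_add, mul_assoc]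
  refine mul_le_mul_of_nonneg_left ?_ (norm_nonneg _)
  nlinarith [sq_nonneg (‖u p.2‖ - ‖v p.1‖), sq_nonneg (‖u p.2‖), sq_nonneg (‖v p.1‖)]

lemma summable_conv_norm {V u : Coeff d} (hV : Summable (fun G => ‖V G‖))
    (hu : Summable (fun G => ‖u G‖ ^ 2)) (G : Idx d) :
    Summable (fun G' => ‖V (G - G')‖ * ‖u G'‖) := by
  refine Summable.of_nonneg_of_le (fun _ => by positivity) ?_
    ((summable_sub_right hV G).add ((summable_kernel_right hV hu).prod_factor G))
  intro G'
  nlinarith [norm_nonneg (V (G - G')), sq_nonneg (‖u G'‖ - 1), norm_nonneg (u G'),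
    mul_nonneg (norm_nonneg (V (G - G'))) (sq_nonneg (‖u G'‖ - 1)),
    mul_nonneg (norm_nonneg (V (G - G'))) (norm_nonneg (u G'))]

lemma summable_conv {V u : Coeff d} (hV : Summable (fun G => ‖V G‖))
    (hu : Summable (fun G => ‖u G‖ ^ 2)) (G : Idx d) :
    Summable (fun G' => V (G - G') * u G') := by
  refine Summable.of_norm ?_
  simpa [norm_mul] using summable_conv_norm hV hu G

/-- Weighted Cauchy–Schwarz for series. -/
lemma sq_tsum_mul_le {ι : Type*} {a b : ι → ℝ} (ha0 : ∀ i, 0 ≤ a i)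
    (ha : Summable a) (hab : Summable (fun i => a i * b i))
    (hab2 : Summable (fun i => a i * b i ^ 2)) :
    (∑' i, a i * b i) ^ 2 ≤ (∑' i, a i) * ∑' i, a i * b i ^ 2 := by
  -- The quadratic polynomial `t ↦ ∑ aᵢ (t + bᵢ)²` is nonnegative.
  have key : ∀ t : ℝ, 0 ≤ (∑' i, a i) * (t * t) + (2 * ∑' i, a i * b i) * t +
      ∑' i, a i * b i ^ 2 := by
    intro t
    have h : HasSum (fun i => a i * (t + b i) ^ 2) ((∑' i, a i) * (t * t) +
        (2 * ∑' i, a i * b i) * t + ∑' i, a i * b i ^ 2) := by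
      have h := ((ha.hasSum.mul_right (t * t)).add
        ((hab.hasSum.mul_left 2).mul_right t)).add hab2.hasSum
      exact h.congr_fun fun i => by ring
    exact h.nonneg fun i => mul_nonneg (ha0 i) (sq_nonneg _)
  have := discrim_le_zero key
  rw [discrim] at this
  linarith

/-- Young's inequality `ℓ¹ * ℓ² ⊆ ℓ²`: multiplication by `V` maps `L_p²` to itself. -/
lemma summable_mulCoeff {V u : Coeff d} (hV : Summable (fun G => ‖V G‖))
    (hu : Summable (fun G => ‖u G‖ ^ 2)) : Summable (fun G => ‖mulCoeff V u G‖ ^ 2) := by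
  have hp := ((summable_kernel_right hV hu).prod).mul_left (∑' G, ‖V G‖)
  have : Summable (fun G => ‖∑' G', V (G - G') * u G'‖ ^ 2) := by
    refine Summable.of_nonneg_of_le (fun _ => by positivity) ?_ hp
    intro G
    have h1 : ‖∑' G', V (G - G') * u G'‖ ≤ ∑' G', ‖V (G - G')‖ * ‖u G'‖ := by
      refine (norm_tsum_le_tsum_norm ?_).trans (le_of_eq ?_)
      · simpa [norm_mul] using summable_conv_norm hV hu G
      · simp
    refine (pow_le_pow_left₀ (norm_nonneg _) h1 2).trans ?_
    have h2 := sq_tsum_mul_le (a := fun G' => ‖V (G - G')‖) (b := fun G' => ‖u G'‖)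
      (fun _ => norm_nonneg _) (summable_sub_right hV G) (summable_conv_norm hV hu G)
      ((summable_kernel_right hV hu).prod_factor G)
    have h3 : ∑' G', ‖V (G - G')‖ = ∑' G, ‖V G‖ :=
      (Equiv.subLeft G).tsum_eq (fun G => ‖V G‖)
    rw [h3] at h2
    exact h2
  refine (this.mul_left (‖(((Real.sqrt ((2 * Real.pi) ^ d))⁻¹ : ℝ) : ℂ)‖ ^ 2)).congr ?_
  intro G
  rw [mulCoeff, norm_mul]
  exact (mul_pow _ _ _).symm

lemma mulCoeff_neg {V u : Coeff d} (hV : ∀ G, V (-G) = starRingEnd ℂ (V G))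
    (hu : ∀ G, u (-G) = starRingEnd ℂ (u G)) (G : Idx d) :
    mulCoeff V u (-G) = starRingEnd ℂ (mulCoeff V u G) := by
  rw [mulCoeff, mulCoeff, map_mul, Complex.conj_ofReal, Complex.conj_tsum,
    ← (Equiv.neg (Idx d)).tsum_eq]
  congr 1
  refine tsum_congr fun G' => ?_
  rw [map_mul, ← hV, ← hu]
  simp only [Equiv.neg_apply]
  congr 2
  abel

lemma mulCoeff_sub {V u v : Coeff d} (hV : Summable (fun G => ‖V G‖))
    (hu : Summable (fun G => ‖u G‖ ^ 2)) (hv : Summable (fun G => ‖v G‖ ^ 2)) :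
    mulCoeff V (u - v) = mulCoeff V u - mulCoeff V v := by
  ext G
  simp only [mulCoeff, Pi.sub_apply, mul_sub]
  rw [(summable_conv hV hu G).tsum_sub (summable_conv hV hv G), mul_sub]

/-- Multiplication by the real potential `V` is symmetric on `L_p²`. -/
lemma l2inner_mulCoeff_symm {V u v : Coeff d} (hV : Summable (fun G => ‖V G‖))
    (hVs : ∀ G, V (-G) = starRingEnd ℂ (V G))
    (hu : Summable (fun G => ‖u G‖ ^ 2)) (hv : Summable (fun G => ‖v G‖ ^ 2)) :
    l2inner (mulCoeff V u) v = starRingEnd ℂ (l2inner (mulCoeff V v) u) := by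
  set c : ℂ := (((Real.sqrt ((2 * Real.pi) ^ d))⁻¹ : ℝ) : ℂ) with hc
  have hcc : starRingEnd ℂ c = c := Complex.conj_ofReal _
  have h1 : l2inner (mulCoeff V u) v = c * ∑' G, ∑' G',
      starRingEnd ℂ (V (G - G')) * starRingEnd ℂ (u G') * v G := by
    rw [l2inner, ← tsum_mul_left]
    refine tsum_congr fun G => ?_
    rw [mulCoeff, ← hc, map_mul, hcc, Complex.conj_tsum, mul_assoc, ← tsum_mul_right]
    simp only [map_mul]
  have h2 : starRingEnd ℂ (l2inner (mulCoeff V v) u) = c * ∑' G', ∑' G,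
      starRingEnd ℂ (V (G - G')) * starRingEnd ℂ (u G') * v G := by
    rw [l2inner, ← tsum_mul_left, Complex.conj_tsum]
    refine tsum_congr fun G' => ?_
    rw [mulCoeff, ← hc, map_mul, Complex.conj_conj, mul_assoc, ← tsum_mul_right]
    congr 1
    refine tsum_congr fun G => ?_
    rw [← hVs, neg_sub]
    ring
  rw [h1, h2]
  congr 1
  exact (Summable.tsum_comm (f := fun G G' : Idx d =>
    starRingEnd ℂ (V (G - G')) * starRingEnd ℂ (u G') * v G) (summable_kernel hV hu hv)).symm

/-! ### The energy form -/

lemma summable_grad {u v : Coeff d} (hu : memHs 1 u) (hv : memHs 1 v) :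
    Summable (fun G => (gnormSq G : ℂ) * starRingEnd ℂ (u G) * v G) := by
  refine Summable.of_norm_bounded ((memHs_one.grad hu).add (memHs_one.grad hv)) ?_
  intro G
  rw [norm_mul, norm_mul, RCLike.norm_conj, Complex.norm_real,
    Real.norm_of_nonneg (gnormSq_nonneg G), ← mul_add, mul_assoc]
  refine mul_le_mul_of_nonneg_left ?_ (gnormSq_nonneg G)
  nlinarith [sq_nonneg (‖u G‖ - ‖v G‖), sq_nonneg (‖u G‖), sq_nonneg (‖v G‖)]

lemma aForm_sub_left {V u v w : Coeff d} (hV : Summable (fun G => ‖V G‖))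
    (hu : memHs 1 u) (hv : memHs 1 v) (hw : memHs 1 w) :
    aForm V (u - v) w = aForm V u w - aForm V v w := by
  have h1 : ∑' G, (gnormSq G : ℂ) * starRingEnd ℂ ((u - v) G) * w G =
      ∑' G, (gnormSq G : ℂ) * starRingEnd ℂ (u G) * w G -
      ∑' G, (gnormSq G : ℂ) * starRingEnd ℂ (v G) * w G := by
    rw [← (summable_grad hu hw).tsum_sub (summable_grad hv hw)]
    refine tsum_congr fun G => ?_
    simp only [Pi.sub_apply, map_sub]
    ring
  have h2 : l2inner (mulCoeff V (u - v)) w =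
      l2inner (mulCoeff V u) w - l2inner (mulCoeff V v) w := by
    rw [mulCoeff_sub hV (memHs_one.sq hu) (memHs_one.sq hv), l2inner, l2inner, l2inner,
      ← (summable_inner (summable_mulCoeff hV (memHs_one.sq hu)) (memHs_one.sq hw)).tsum_sub
        (summable_inner (summable_mulCoeff hV (memHs_one.sq hv)) (memHs_one.sq hw))]
    refine tsum_congr fun G => ?_
    simp only [Pi.sub_apply, map_sub]
    ring
  rw [aForm, h1, h2, aForm, aForm]
  ring

lemma aForm_symm {V u v : Coeff d} (hV : Summable (fun G => ‖V G‖))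
    (hVs : ∀ G, V (-G) = starRingEnd ℂ (V G)) (hu : memHs 1 u) (hv : memHs 1 v) :
    aForm V u v = starRingEnd ℂ (aForm V v u) := by
  rw [aForm, aForm, map_add, ← l2inner_mulCoeff_symm hV hVs (memHs_one.sq hu) (memHs_one.sq hv),
    Complex.conj_tsum]
  congr 1
  refine tsum_congr fun G => ?_
  simp only [map_mul, Complex.conj_conj, Complex.conj_ofReal]
  ring

/-- Expansion of the square, `a(u-v,u-v) = a(u,u) - 2a(u,v) + a(v,v)`. -/
lemma aForm_sub_self {V u v : Coeff d} (hV : Summable (fun G => ‖V G‖))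
    (hVs : ∀ G, V (-G) = starRingEnd ℂ (V G)) (hu : memHs 1 u) (hv : memHs 1 v) :
    (aForm V (u - v) (u - v)).re =
      (aForm V u u).re - 2 * (aForm V u v).re + (aForm V v v).re := by
  have huv := memHs_one.sub hu hv
  rw [aForm_sub_left hV hu hv huv, aForm_symm hV hVs hu huv, aForm_symm hV hVs hv huv,
    aForm_sub_left hV hu hv hu, aForm_sub_left hV hu hv hv, aForm_symm hV hVs hv hu]
  simp only [Complex.sub_re, Complex.conj_re]
  ring

lemma aForm_self_re {V u : Coeff d} (hu : memHs 1 u) :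
    (aForm V u u).re = ∑' G, gnormSq G * ‖u G‖ ^ 2 + (l2inner (mulCoeff V u) u).re := by
  rw [aForm, Complex.add_re, Complex.re_tsum (summable_grad hu hu)]
  congr 1
  refine tsum_congr fun G => ?_
  rw [mul_assoc, Complex.re_ofReal_mul, Complex.conj_mul', ← Complex.ofReal_pow,
    Complex.ofReal_re]

lemma tsum_one_add {u : Coeff d} (hu : memHs 1 u) :
    ∑' G, (1 + gnormSq G) * ‖u G‖ ^ 2 = l2NormSq u + ∑' G, gnormSq G * ‖u G‖ ^ 2 := by
  rw [l2NormSq, ← (memHs_one.sq hu).tsum_add (memHs_one.grad hu)]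
  refine tsum_congr fun G => ?_
  ring

lemma aForm_coercive {V u : Coeff d} {ν₁ ν₂ : ℝ} (hVb : PotentialBounds V ν₁ ν₂)
    (hu : memHs 1 u) :
    min ν₁ 1 * ∑' G, (1 + gnormSq G) * ‖u G‖ ^ 2 ≤ (aForm V u u).re := by
  rw [aForm_self_re hu, tsum_one_add hu]
  have h1 := (hVb u (memHs_one.zero hu)).1
  have h2 : 0 ≤ l2NormSq u := tsum_nonneg fun _ => sq_nonneg _
  have h3 : 0 ≤ ∑' G, gnormSq G * ‖u G‖ ^ 2 :=
    tsum_nonneg fun G => mul_nonneg (gnormSq_nonneg G) (sq_nonneg _)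
  have h4 := mul_le_mul_of_nonneg_right (min_le_left ν₁ 1) h2
  have h5 := mul_le_mul_of_nonneg_right (min_le_right ν₁ 1) h3
  linarith

lemma aForm_bounded {V u : Coeff d} {ν₁ ν₂ : ℝ} (hVb : PotentialBounds V ν₁ ν₂)
    (hu : memHs 1 u) :
    (aForm V u u).re ≤ max ν₂ 1 * ∑' G, (1 + gnormSq G) * ‖u G‖ ^ 2 := by
  rw [aForm_self_re hu, tsum_one_add hu]
  have h1 := (hVb u (memHs_one.zero hu)).2
  have h2 : 0 ≤ l2NormSq u := tsum_nonneg fun _ => sq_nonneg _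
  have h3 : 0 ≤ ∑' G, gnormSq G * ‖u G‖ ^ 2 :=
    tsum_nonneg fun G => mul_nonneg (gnormSq_nonneg G) (sq_nonneg _)
  have h4 := mul_le_mul_of_nonneg_right (le_max_left ν₂ 1) h2
  have h5 := mul_le_mul_of_nonneg_right (le_max_right ν₂ 1) h3
  linarith

lemma aForm_self_nonneg {V u : Coeff d} {ν₁ ν₂ : ℝ} (hν₁ : 0 < ν₁)
    (hVb : PotentialBounds V ν₁ ν₂) (hu : memHs 1 u) : 0 ≤ (aForm V u u).re :=
  le_trans (mul_nonneg (lt_min hν₁ one_pos).le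
    (tsum_nonneg fun G => mul_nonneg (one_add_gnormSq_pos G).le (sq_nonneg _)))
    (aForm_coercive hVb hu)

/-! ### The residual -/

/-- The residual of an `H_p¹` function has finite `H_p^{-1}` norm. -/
lemma summable_rbar {V f w : Coeff d} (hV : Summable (fun G => ‖V G‖))
    (hf : memHs 0 f) (hw : memHs 1 w) :
    Summable (fun G => (1 + gnormSq G)⁻¹ * ‖rbar V f w G‖ ^ 2) := by
  refine Summable.of_nonneg_of_le
    (fun G => mul_nonneg (inv_nonneg.2 (one_add_gnormSq_pos G).le) (sq_nonneg _)) ?_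
    ((((memHs_zero_iff.1 hf).1.mul_left 4).add ((memHs_one.grad hw).mul_left 4)).add
      ((summable_mulCoeff hV (memHs_one.sq hw)).mul_left 2))
  intro G
  have hg := gnormSq_nonneg G
  have hp := one_add_gnormSq_pos G
  rw [inv_mul_le_iff₀ hp, rbar, ← sub_sub]
  have h1 := norm_sub_sq_le (f G - (gnormSq G : ℂ) * w G) (mulCoeff V w G)
  have h2 := norm_sub_sq_le (f G) ((gnormSq G : ℂ) * w G)
  rw [norm_mul, Complex.norm_real, Real.norm_of_nonneg hg, mul_pow] at h2
  have h3 := mul_nonneg hg (sq_nonneg ‖f G‖)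
  have h4 := mul_nonneg hg (sq_nonneg ‖mulCoeff V w G‖)
  have h5 := mul_nonneg hg (sq_nonneg ‖w G‖)
  nlinarith

lemma l2inner_rbar {V f w v : Coeff d} (hV : Summable (fun G => ‖V G‖))
    (hf : memHs 0 f) (hw : memHs 1 w) (hv : memHs 1 v) :
    HasSum (fun G => starRingEnd ℂ (rbar V f w G) * v G) (l2inner f v - aForm V w v) := by
  have h1 := (summable_inner (memHs_zero_iff.1 hf).1 (memHs_one.sq hv)).hasSum
  have h2 := (summable_grad hw hv).hasSum
  have h3 := (summable_inner (summable_mulCoeff hV (memHs_one.sq hw)) (memHs_one.sq hv)).hasSum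
  have h := h1.sub (h2.add h3)
  refine h.congr_fun ?_
  intro G
  simp only [rbar, map_sub, map_add, map_mul, Complex.conj_ofReal]
  ring

lemma eta_sq (𝔾s : Set (Idx d)) (r : Coeff d) :
    eta 𝔾s r ^ 2 = ∑' G, (1 + gnormSq G)⁻¹ * ‖proj 𝔾s r G‖ ^ 2 := by
  rw [eta, hsNorm, hsNormSq, Real.sq_sqrt]
  · refine tsum_congr fun G => ?_
    rw [Real.rpow_neg_one]
  · exact tsum_nonneg fun G =>
      mul_nonneg (Real.rpow_nonneg (one_add_gnormSq_pos G).le _) (sq_nonneg _)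

lemma summable_proj_rbar {V f w : Coeff d} (𝔾s : Set (Idx d)) (hV : Summable (fun G => ‖V G‖))
    (hf : memHs 0 f) (hw : memHs 1 w) :
    Summable (fun G => (1 + gnormSq G)⁻¹ * ‖proj 𝔾s (rbar V f w) G‖ ^ 2) := by
  refine Summable.of_nonneg_of_le
    (fun G => mul_nonneg (inv_nonneg.2 (one_add_gnormSq_pos G).le) (sq_nonneg _)) ?_
    (summable_rbar hV hf hw)
  intro G
  refine mul_le_mul_of_nonneg_left ?_ (inv_nonneg.2 (one_add_gnormSq_pos G).le)
  unfold proj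
  split_ifs
  · exact le_rfl
  · simp

/-- Local upper bound: if `e ∈ V_{𝔾*}` and `a(e,e)` is the residual of `w` tested with `e`, then
`a(e,e)` is controlled by the part of the residual seen by `𝔾*`. Duality between `H_p^{-1}` and `H_p^1` and
coercivity give `2‖e‖_a² ≤ α_*⁻¹ η̄² + α_* ‖e‖_{H^1}² ≤ α_*⁻¹ η̄² + ‖e‖_a²`. -/
lemma local_upper {V f w e : Coeff d} {ν₁ ν₂ : ℝ} (hν₁ : 0 < ν₁)
    (hV : Summable (fun G => ‖V G‖)) (hVb : PotentialBounds V ν₁ ν₂)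
    (𝔾s : Set (Idx d)) (hf : memHs 0 f) (hw : memHs 1 w) (he : memHs 1 e)
    (hes : e ∈ pwSpace 𝔾s) (hr : aForm V e e = l2inner f e - aForm V w e) :
    (aForm V e e).re ≤ (min ν₁ 1)⁻¹ * eta 𝔾s (rbar V f w) ^ 2 := by
  set α := min ν₁ 1 with hα
  have hα0 : 0 < α := lt_min hν₁ one_pos
  have h1 := Complex.hasSum_re (l2inner_rbar hV hf hw he)
  rw [← hr] at h1
  have h2 := ((summable_proj_rbar 𝔾s hV hf hw).hasSum.mul_left α⁻¹).add
    ((memHs_one_iff.1 he).1.hasSum.mul_left α)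
  rw [← eta_sq] at h2
  have h3 := hasSum_le (fun G => ?_) (h1.mul_left 2) h2
  · have h4 := aForm_coercive hVb he
    rw [← hα] at h4
    linarith
  have hp := one_add_gnormSq_pos G
  have h5 : starRingEnd ℂ (rbar V f w G) * e G =
      starRingEnd ℂ (proj 𝔾s (rbar V f w) G) * e G := by
    unfold proj
    split_ifs with h
    · rfl
    · rw [hes G h, mul_zero, mul_zero]
  rw [h5]
  have h6 : (starRingEnd ℂ (proj 𝔾s (rbar V f w) G) * e G).re ≤
      ‖proj 𝔾s (rbar V f w) G‖ * ‖e G‖ := by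
    refine (Complex.re_le_norm _).trans ?_
    rw [norm_mul, RCLike.norm_conj]
  refine (mul_le_mul_of_nonneg_left h6 zero_le_two).trans ?_
  set p := ‖proj 𝔾s (rbar V f w) G‖
  set q := ‖e G‖
  set k := α * (1 + gnormSq G) with hk
  have hk0 : 0 < k := mul_pos hα0 hp
  have h7 : α⁻¹ * ((1 + gnormSq G)⁻¹ * p ^ 2) + α * ((1 + gnormSq G) * q ^ 2) - 2 * (p * q) =
      k⁻¹ * (p - k * q) ^ 2 := by
    rw [hk]
    field_simp
    ring
  have h8 : 0 ≤ k⁻¹ * (p - k * q) ^ 2 := by positivity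
  linarith

/-- Global lower bound. The test function is the scaled Riesz representative
`z = (α^*)⁻¹ (1-Δ)⁻¹ r̄`, for which `a(e,z) = η̄²/α^*` and `a(z,z) ≤ η̄²/α^*`; the claim is
`a(e-z,e-z) ≥ 0`. -/
lemma global_lower {V f w e : Coeff d} {ν₁ ν₂ : ℝ} (hν₁ : 0 < ν₁)
    (hV : Summable (fun G => ‖V G‖)) (hVs : ∀ G, V (-G) = starRingEnd ℂ (V G))
    (hVb : PotentialBounds V ν₁ ν₂) (hf : memHs 0 f) (hw : memHs 1 w) (he : memHs 1 e)
    (hr : ∀ v, memHs 1 v → aForm V e v = l2inner f v - aForm V w v) :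
    eta Set.univ (rbar V f w) ^ 2 ≤ max ν₂ 1 * (aForm V e e).re := by
  set β := max ν₂ 1 with hβ
  have hβ0 : 0 < β := lt_of_lt_of_le one_pos (le_max_right _ _)
  set r := rbar V f w with hrdef
  have hrs : ∀ G, r (-G) = starRingEnd ℂ (r G) := by
    intro G
    simp only [hrdef, rbar, gnormSq_neg, hf.2 G, hw.2 G, mulCoeff_neg hVs hw.2 G, map_sub, map_add,
      map_mul, Complex.conj_ofReal]
  have hη : HasSum (fun G => (1 + gnormSq G)⁻¹ * ‖r G‖ ^ 2) (eta Set.univ r ^ 2) := by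
    rw [eta_sq]
    simpa [proj] using (summable_rbar hV hf hw).hasSum
  let z : Coeff d := fun G => (((β * (1 + gnormSq G))⁻¹ : ℝ) : ℂ) * r G
  have hz1 : HasSum (fun G => (1 + gnormSq G) * ‖z G‖ ^ 2) ((β ^ 2)⁻¹ * eta Set.univ r ^ 2) := by
    refine (hη.mul_left _).congr_fun ?_
    intro G
    have hp := one_add_gnormSq_pos G
    simp only [z, norm_mul, Complex.norm_real]
    rw [Real.norm_of_nonneg (by positivity)]
    field_simp
  have hz : memHs 1 z := by
    refine memHs_one_iff.2 ⟨hz1.summable, fun G => ?_⟩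
    simp only [z, gnormSq_neg, hrs, map_mul, Complex.conj_ofReal]
  have hez : (aForm V e z).re = β⁻¹ * eta Set.univ r ^ 2 := by
    have h1 := Complex.hasSum_re (l2inner_rbar hV hf hw hz)
    rw [← hr z hz] at h1
    refine h1.unique ((hη.mul_left _).congr_fun ?_)
    intro G
    have hp := one_add_gnormSq_pos G
    rw [← hrdef]
    simp only [z]
    rw [mul_left_comm, Complex.re_ofReal_mul, Complex.conj_mul', ← Complex.ofReal_pow,
      Complex.ofReal_re]
    field_simp
  have hzz := aForm_bounded hVb hz
  rw [hz1.tsum_eq, ← hβ] at hzz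
  have h0 := aForm_self_nonneg hν₁ hVb (memHs_one.sub he hz)
  rw [aForm_sub_self hV hVs he hz, hez] at h0
  have h2 : β * ((β ^ 2)⁻¹ * eta Set.univ r ^ 2) = β⁻¹ * eta Set.univ r ^ 2 := by
    field_simp
  rw [← inv_mul_le_iff₀ hβ0]
  linarith

/-- Pythagorean identity, with the Galerkin orthogonality of the two error parts as hypothesis. -/
lemma pythagoras {V u us w : Coeff d} (hV : Summable (fun G => ‖V G‖))
    (hVs : ∀ G, V (-G) = starRingEnd ℂ (V G)) (hu : memHs 1 u) (hus : memHs 1 us)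
    (hw : memHs 1 w) (horth : aForm V (u - us) (us - w) = 0) :
    (aForm V (u - w) (u - w)).re =
      (aForm V (u - us) (u - us)).re + (aForm V (us - w) (us - w)).re := by
  have hA := memHs_one.sub hu hus
  have hB := memHs_one.sub hus hw
  have hC := memHs_one.sub hu hw
  have h : u - us = (u - w) - (us - w) := by abel
  have h1 := aForm_sub_self hV hVs hC hB
  rw [← h] at h1
  have h2 : aForm V (u - us) (us - w) = aForm V (u - w) (us - w) - aForm V (us - w) (us - w) := by
    rw [h, aForm_sub_left hV hC hB hB]
  rw [horth] at h2
  have h3 : (aForm V (u - w) (us - w)).re = (aForm V (us - w) (us - w)).re := by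
    rw [sub_eq_zero.1 h2.symm]
  linarith

lemma aNormT_sq {N : ℕ} {V : Coeff d} {W : Fin N → Coeff d} {ν₁ ν₂ : ℝ} (hν₁ : 0 < ν₁)
    (hVb : PotentialBounds V ν₁ ν₂) (hW : ∀ i, memHs 1 (W i)) :
    aNormT V W ^ 2 = ∑ i, (aForm V (W i) (W i)).re := by
  rw [aNormT, Real.sq_sqrt (Finset.sum_nonneg fun _ _ => sq_nonneg _)]
  refine Finset.sum_congr rfl fun i _ => ?_
  rw [aNorm, Real.sq_sqrt (aForm_self_nonneg hν₁ hVb (hW i))]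

/-- Propositions 4.1 and 4.2: for nested index sets `𝔾 ⊆ 𝔾*` and
Galerkin solutions `U_𝔾`, `U_{𝔾*}` of the source system:
(i) `‖U_{𝔾*} − U_𝔾‖²_a ≤ (1/α_*) η̄²(U_𝔾;𝔾*)`;
(ii) if `‖U − U_{𝔾*}‖²_a ≤ μ‖U − U_𝔾‖²_a` with `μ ∈ (0,1)`, then
`η̄(U_𝔾;𝔾*) ≥ θ η̄(U_𝔾)` with `θ = √((1−μ)α_*/α^*)`. -/
theorem statement19 (d N : ℕ) (hd : 1 ≤ d) (V : Coeff d) (σ ν₁ ν₂ : ℝ)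
    (hσ : (d : ℝ) / 2 < σ) (hV : memHs σ V) (hν₁ : 0 < ν₁) (hν₁₂ : ν₁ ≤ ν₂)
    (hVb : PotentialBounds V ν₁ ν₂)
    (f U : Fin N → Coeff d) (hf : ∀ i, memHs 0 (f i))
    (hU : ∀ i, memHs 1 (U i) ∧ ∀ v, memHs 1 v → aForm V (U i) v = l2inner (f i) v)
    (𝔾 𝔾s : Set (Idx d)) (h𝔾ne : 𝔾.Nonempty) (hsub : 𝔾 ⊆ 𝔾s)
    (h𝔾sym : 𝔾 = -𝔾) (h𝔾ssym : 𝔾s = -𝔾s)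
    (U𝔾 U𝔾s : Fin N → Coeff d)
    (hU𝔾 : ∀ i, U𝔾 i ∈ pwSpace 𝔾 ∧ memHs 1 (U𝔾 i) ∧
      ∀ v ∈ pwSpace 𝔾, memHs 1 v → aForm V (U𝔾 i) v = l2inner (f i) v)
    (hU𝔾s : ∀ i, U𝔾s i ∈ pwSpace 𝔾s ∧ memHs 1 (U𝔾s i) ∧
      ∀ v ∈ pwSpace 𝔾s, memHs 1 v → aForm V (U𝔾s i) v = l2inner (f i) v) :
    (aNormT V (U𝔾s - U𝔾)) ^ 2 ≤
        (min ν₁ 1)⁻¹ * ∑ i, (eta 𝔾s (rbar V (f i) (U𝔾 i))) ^ 2 ∧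
      ∀ μ : ℝ, μ ∈ Set.Ioo (0 : ℝ) 1 →
        (aNormT V (U - U𝔾s)) ^ 2 ≤ μ * (aNormT V (U - U𝔾)) ^ 2 →
        Real.sqrt ((1 - μ) * min ν₁ 1 / max ν₂ 1) *
            Real.sqrt (∑ i, (eta Set.univ (rbar V (f i) (U𝔾 i))) ^ 2) ≤
          Real.sqrt (∑ i, (eta 𝔾s (rbar V (f i) (U𝔾 i))) ^ 2) := by
  have hV1 := summable_norm_of_memHs hσ hV
  have hα0 : 0 < min ν₁ 1 := lt_min hν₁ one_pos
  have hβ0 : 0 < max ν₂ 1 := lt_of_lt_of_le one_pos (le_max_right _ _)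
  have hmono : ∀ v : Coeff d, v ∈ pwSpace 𝔾 → v ∈ pwSpace 𝔾s :=
    fun v hv G hG => hv G fun h => hG (hsub h)
  have hes : ∀ i, U𝔾s i - U𝔾 i ∈ pwSpace 𝔾s := by
    intro i G hG
    simp [(hU𝔾s i).1 G hG, hmono _ (hU𝔾 i).1 G hG]
  have hm : ∀ i, memHs 1 (U𝔾s i - U𝔾 i) := fun i => memHs_one.sub (hU𝔾s i).2.1 (hU𝔾 i).2.1
  have hup : ∀ i, (aForm V (U𝔾s i - U𝔾 i) (U𝔾s i - U𝔾 i)).re ≤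
      (min ν₁ 1)⁻¹ * eta 𝔾s (rbar V (f i) (U𝔾 i)) ^ 2 := by
    intro i
    refine local_upper hν₁ hV1 hVb 𝔾s (hf i) (hU𝔾 i).2.1 (hm i) (hes i) ?_
    rw [aForm_sub_left hV1 (hU𝔾s i).2.1 (hU𝔾 i).2.1 (hm i),
      (hU𝔾s i).2.2 _ (hes i) (hm i)]
  have hi : (aNormT V (U𝔾s - U𝔾)) ^ 2 ≤
      (min ν₁ 1)⁻¹ * ∑ i, (eta 𝔾s (rbar V (f i) (U𝔾 i))) ^ 2 := by
    rw [aNormT_sq (W := U𝔾s - U𝔾) hν₁ hVb hm, Finset.mul_sum]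
    exact Finset.sum_le_sum fun i _ => hup i
  refine ⟨hi, fun μ hμ hred => ?_⟩
  have hlow : ∑ i, (eta Set.univ (rbar V (f i) (U𝔾 i))) ^ 2 ≤
      max ν₂ 1 * (aNormT V (U - U𝔾)) ^ 2 := by
    rw [aNormT_sq (W := U - U𝔾) hν₁ hVb
        (fun i => memHs_one.sub (hU i).1 (hU𝔾 i).2.1), Finset.mul_sum]
    refine Finset.sum_le_sum fun i _ => ?_
    refine global_lower hν₁ hV1 hV.2 hVb (hf i) (hU𝔾 i).2.1
      (memHs_one.sub (hU i).1 (hU𝔾 i).2.1) fun v hv => ?_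
    rw [Pi.sub_apply, aForm_sub_left hV1 (hU i).1 (hU𝔾 i).2.1 hv, (hU i).2 v hv]
  have hpyth : (aNormT V (U - U𝔾)) ^ 2 =
      (aNormT V (U - U𝔾s)) ^ 2 + (aNormT V (U𝔾s - U𝔾)) ^ 2 := by
    rw [aNormT_sq (W := U - U𝔾) hν₁ hVb
        (fun i => memHs_one.sub (hU i).1 (hU𝔾 i).2.1),
      aNormT_sq (W := U - U𝔾s) hν₁ hVb
        (fun i => memHs_one.sub (hU i).1 (hU𝔾s i).2.1),
      aNormT_sq (W := U𝔾s - U𝔾) hν₁ hVb hm, ← Finset.sum_add_distrib]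
    refine Finset.sum_congr rfl fun i _ => ?_
    refine pythagoras hV1 hV.2 (hU i).1 (hU𝔾s i).2.1 (hU𝔾 i).2.1 ?_
    rw [aForm_sub_left hV1 (hU i).1 (hU𝔾s i).2.1 (hm i), (hU i).2 _ (hm i),
      (hU𝔾s i).2.2 _ (hes i) (hm i), sub_self]
  have h1μ : 0 < 1 - μ := by linarith [hμ.2]
  rw [← Real.sqrt_mul (by positivity)]
  refine Real.sqrt_le_sqrt ?_
  rw [div_mul_eq_mul_div, div_le_iff₀ hβ0]
  have hi' := (le_inv_mul_iff₀ hα0).1 hi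
  set E := ∑ i, (eta Set.univ (rbar V (f i) (U𝔾 i))) ^ 2
  set S := ∑ i, (eta 𝔾s (rbar V (f i) (U𝔾 i))) ^ 2
  set A := (aNormT V (U - U𝔾)) ^ 2
  have hA : (1 - μ) * A ≤ (aNormT V (U𝔾s - U𝔾)) ^ 2 := by linarith
  calc (1 - μ) * min ν₁ 1 * E ≤ (1 - μ) * min ν₁ 1 * (max ν₂ 1 * A) := by gcongr
    _ = max ν₂ 1 * (min ν₁ 1 * ((1 - μ) * A)) := by ring
    _ ≤ max ν₂ 1 * (min ν₁ 1 * (aNormT V (U𝔾s - U𝔾)) ^ 2) := by gcongr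
    _ ≤ max ν₂ 1 * S := by gcongr
    _ = S * max ν₂ 1 := by ring

end APW
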